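/- Let 1 < p < ∞, p' = p/(p−1), and let ω and ν be radial weights. If the Bergman projection P_ω is bounded on L^p_ν, then the set {s ∈ [0,1) : ν(s) = 0} has measure zero with respect to ω(s)ds, and ∫₀¹ s (ω(s)/ν(s)^{1/p})^{p'} ds < ∞. -/

import Mathlib

open MeasureTheory Set Metric
open scoped ENNReal NNReal

noncomputable section

/-- `ω̂(r) = ∫_r^1 ω(s) ds`. -/
def hatw (w : ℝ → ℝ) (r : ℝ) : ℝ := ∫ s in Set.Ioo r 1, w s

/-- `ω̂₁(r) = ∫_r^1 s ω(s) ds`. -/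
def hat1 (w : ℝ → ℝ) (r : ℝ) : ℝ := ∫ s in Set.Ioo r 1, s * w s

/-- A radial weight: nonnegative, integrable on `[0,1)`, with `ω̂(r) > 0` for `0 ≤ r < 1`. -/
def IsRadialWeight (w : ℝ → ℝ) : Prop :=
  (∀ r ∈ Set.Ico (0:ℝ) 1, 0 ≤ w r) ∧ MeasureTheory.IntegrableOn w (Set.Ico (0:ℝ) 1) ∧
    ∀ r ∈ Set.Ico (0:ℝ) 1, 0 < hatw w r

/-- The odd moment `ω_{2n+1} = ∫₀¹ r^{2n+1} ω(r) dr`. -/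
def moment (w : ℝ → ℝ) (n : ℕ) : ℝ := ∫ r in Set.Ioo (0:ℝ) 1, r ^ (2 * n + 1) * w r

/-- The Bergman reproducing kernel `B_z^ω(ζ) = Σ_n (conj z · ζ)^n / (2 ω_{2n+1})`. -/
def Bker (w : ℝ → ℝ) (z ζ : ℂ) : ℂ :=
  ∑' n : ℕ, ((starRingEnd ℂ) z * ζ) ^ n / ((2 * moment w n : ℝ) : ℂ)

/-- The `L^p_ν` norm (with `dA` = area measure divided by `π`) of a complex-valued
function on the unit disc. -/
def LpC (p : ℝ) (v : ℝ → ℝ) (f : ℂ → ℂ) : ℝ≥0∞ :=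
  ((∫⁻ z in Metric.ball (0:ℂ) 1, ENNReal.ofReal (‖f z‖ ^ p * v ‖z‖)) /
    ENNReal.ofReal Real.pi) ^ (1 / p)

/-- The Bergman projection `P_ω(f)(z) = ∫_𝔻 f(ζ) conj(B_z^ω(ζ)) ω(ζ) dA(ζ)`. -/
def Pw (w : ℝ → ℝ) (f : ℂ → ℂ) (z : ℂ) : ℂ :=
  (∫ ζ in Metric.ball (0:ℂ) 1, f ζ * (starRingEnd ℂ) (Bker w z ζ) * ((w ‖ζ‖ : ℝ) : ℂ)) /
    ((Real.pi : ℝ) : ℂ)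

/-- `P_ω` is bounded on `L^p_ν`: for every `f ∈ L^p_ν` the defining integral converges
absolutely for a.e. `z ∈ 𝔻` and `‖P_ω f‖_{L^p_ν} ≤ C ‖f‖_{L^p_ν}`. -/
def PwBounded (p : ℝ) (w v : ℝ → ℝ) : Prop :=
  ∃ C > (0:ℝ), ∀ f : ℂ → ℂ, Measurable f → LpC p v f < ⊤ →
    (∀ᵐ z ∂(volume.restrict (Metric.ball (0:ℂ) 1)),
      (∫⁻ ζ in Metric.ball (0:ℂ) 1, ENNReal.ofReal (‖f ζ‖ * ‖Bker w z ζ‖ * w ‖ζ‖)) < ⊤) ∧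
    LpC p v (Pw w f) ≤ ENNReal.ofReal C * LpC p v f

/-- `σ(s) = (ω(s)/ν(s)^{1/p})^{p'}`, as an extended nonnegative real (so `σ(s) = ∞`
when `ν(s) = 0 < ω(s)`). -/
def sigmaE (p : ℝ) (w v : ℝ → ℝ) (s : ℝ) : ℝ≥0∞ :=
  (ENNReal.ofReal (w s) / ENNReal.ofReal (v s) ^ (1 / p)) ^ (p / (p - 1))

open Filter Topology

/-!
Rotations annihilate every term of the kernel series except the constant one, so `P_ω` maps a radial
function `g(|z|)` to the constant `∫ g ω dμ / ∫ ω dμ`, where `dμ = 2s ds`. Since `1 ∈ L^p_ν`,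
boundedness of `P_ω` therefore makes `g ↦ ∫ g ω dμ` a bounded functional for the norm
`(∫ g^p ν dμ)^{1/p}`, and testing it on bounded approximations of the extremal function
`(ω / ν)^{p' - 1}` bounds `∫ σ dμ`. Finally `σ = ∞` where `ν = 0 < ω`, so that set is null.
-/

/-! ### The radial part of area measure -/

lemma map_norm_addHaar {E : Type*} [NormedAddCommGroup E] [NormedSpace ℝ E] [Nontrivial E]
    [FiniteDimensional ℝ E] [MeasurableSpace E] [BorelSpace E] (μ : Measure E)
    [μ.IsAddHaarMeasure] :
    μ.map norm = (Module.finrank ℝ E * μ (ball 0 1)) •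
      (volume.restrict (Ioi 0)).withDensity
        fun r : ℝ ↦ ENNReal.ofReal (r ^ (Module.finrank ℝ E - 1)) := by
  let n := Module.finrank ℝ E - 1
  have hnorm : μ.map norm = (μ.comap ((↑) : ({0}ᶜ : Set E) → E)).map (fun x ↦ ‖x.1‖) := by
    rw [← Function.comp_def norm, ← Measure.map_map measurable_norm measurable_subtype_coe,
      map_comap_subtype_coe (measurableSet_singleton 0).compl, restrict_compl_singleton]
  have hpolar : (fun x : ({0}ᶜ : Set E) ↦ ‖x.1‖) =
      ((↑) : Ioi (0 : ℝ) → ℝ) ∘ Prod.snd ∘ homeomorphUnitSphereProd E := by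
    ext x
    simp
  have hIoi : (Measure.volumeIoiPow n).map (↑) =
      (volume.restrict (Ioi 0)).withDensity fun r : ℝ ↦ ENNReal.ofReal (r ^ n) := by
    ext s hs
    rw [← map_comap_subtype_coe measurableSet_Ioi, Measure.volumeIoiPow,
      Measure.map_apply measurable_subtype_coe hs,
      withDensity_apply _ (measurable_subtype_coe hs), withDensity_apply _ hs,
      setLIntegral_map hs (by fun_prop) measurable_subtype_coe]
  rw [hnorm, hpolar, ← Measure.map_map measurable_subtype_coe (by fun_prop),
    ← Measure.map_map measurable_snd (by fun_prop),
    μ.measurePreserving_homeomorphUnitSphereProd.map_eq, Measure.map_snd_prod,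
    Measure.map_smul, hIoi, μ.toSphere_apply_univ]

/-- The probability measure `2s ds` on `(0,1)`: the distribution of `|z|` under the normalised
area measure `dA` of the unit disc. -/
def radialMeasure : Measure ℝ :=
  (volume.restrict (Ioo 0 1)).withDensity fun s ↦ ENNReal.ofReal (2 * s)

lemma map_norm_restrict_ball :
    (volume.restrict (ball (0 : ℂ) 1)).map norm = ENNReal.ofReal Real.pi • radialMeasure := by
  have hball : ball (0 : ℂ) 1 = norm ⁻¹' Iio 1 := by
    ext z
    simp
  have hdensity : (fun s : ℝ ↦ ENNReal.ofReal (2 * s)) = (2 : ℝ≥0∞) • ENNReal.ofReal := by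
    ext s
    simp [ENNReal.ofReal_mul zero_le_two]
  rw [hball, ← Measure.restrict_map measurable_norm measurableSet_Iio, map_norm_addHaar,
    Measure.restrict_smul, restrict_withDensity measurableSet_Iio,
    Measure.restrict_restrict measurableSet_Iio, Iio_inter_Ioi, radialMeasure, hdensity,
    withDensity_smul _ ENNReal.measurable_ofReal, smul_smul, mul_comm]
  simp [Complex.finrank_real_complex, ← NNReal.coe_real_pi]

lemma setLIntegral_ball_comp_norm {F : ℝ → ℝ≥0∞} (hF : AEMeasurable F radialMeasure) :
    ∫⁻ z in ball (0 : ℂ) 1, F ‖z‖ = ENNReal.ofReal Real.pi * ∫⁻ s, F s ∂radialMeasure := by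
  rw [← lintegral_map' (map_norm_restrict_ball ▸ hF.smul_measure _) measurable_norm.aemeasurable,
    map_norm_restrict_ball, lintegral_smul_measure, smul_eq_mul]

section

variable {E : Type*} [NormedAddCommGroup E] {g : ℝ → E}

lemma integrableOn_ball_comp_norm (hg : Integrable g radialMeasure) :
    IntegrableOn (fun z : ℂ ↦ g ‖z‖) (ball 0 1) := by
  have h : Integrable g ((volume.restrict (ball (0 : ℂ) 1)).map norm) :=
    map_norm_restrict_ball ▸ hg.smul_measure ENNReal.ofReal_ne_top
  exact h.comp_measurable measurable_norm

lemma setIntegral_ball_comp_norm [NormedSpace ℝ E] (hg : AEStronglyMeasurable g radialMeasure) :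
    ∫ z in ball (0 : ℂ) 1, g ‖z‖ = Real.pi • ∫ s, g s ∂radialMeasure := by
  rw [← integral_map measurable_norm.aemeasurable (map_norm_restrict_ball ▸ hg.smul_measure _),
    map_norm_restrict_ball, integral_smul_measure, ENNReal.toReal_ofReal Real.pi_nonneg]

end

lemma radialMeasure_le : radialMeasure ≤ (2 : ℝ≥0∞) • volume.restrict (Ioo 0 1) := by
  rw [← withDensity_const]
  refine withDensity_mono ?_
  filter_upwards [ae_restrict_mem measurableSet_Ioo] with s hs
  exact ENNReal.ofReal_le_of_le_toReal (by simpa using hs.2.le)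

lemma integral_radialMeasure (f : ℝ → ℝ) : ∫ s, f s ∂radialMeasure = 2 * moment f 0 := by
  rw [radialMeasure, integral_withDensity_eq_integral_toReal_smul (by fun_prop)
    (.of_forall fun _ ↦ ENNReal.ofReal_lt_top), moment, ← integral_const_mul]
  refine setIntegral_congr_fun measurableSet_Ioo fun s hs ↦ ?_
  simp [mul_assoc, hs.1.le]

/-! ### Radial weights and their moments -/

namespace IsRadialWeight

variable {w : ℝ → ℝ}

lemma integrableOn_Ioo (hw : IsRadialWeight w) : IntegrableOn w (Ioo 0 1) :=
  hw.2.1.mono_set Ioo_subset_Ico_self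

lemma integrable_radialMeasure (hw : IsRadialWeight w) : Integrable w radialMeasure :=
  (hw.integrableOn_Ioo.smul_measure ENNReal.ofNat_ne_top).mono_measure radialMeasure_le

lemma ae_nonneg_radialMeasure (hw : IsRadialWeight w) : 0 ≤ᵐ[radialMeasure] w := by
  refine (withDensity_absolutelyContinuous _ _).ae_le ?_
  filter_upwards [ae_restrict_mem measurableSet_Ioo] with s hs
  exact hw.1 s ⟨hs.1.le, hs.2⟩

lemma lintegral_radialMeasure (hw : IsRadialWeight w) :
    ∫⁻ s, ENNReal.ofReal (w s) ∂radialMeasure = ENNReal.ofReal (2 * moment w 0) := by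
  rw [← ofReal_integral_eq_lintegral_ofReal hw.integrable_radialMeasure hw.ae_nonneg_radialMeasure,
    integral_radialMeasure]

lemma integrableOn_pow_mul (hw : IsRadialWeight w) (k : ℕ) :
    IntegrableOn (fun r ↦ r ^ k * w r) (Ioo 0 1) := by
  refine Integrable.bdd_mul (c := 1) hw.integrableOn_Ioo (by fun_prop) ?_
  filter_upwards [ae_restrict_mem measurableSet_Ioo] with r hr
  rw [norm_pow, Real.norm_of_nonneg hr.1.le]
  exact pow_le_one₀ hr.1.le hr.2.le

lemma pow_mul_hatw_le_moment (hw : IsRadialWeight w) {ρ : ℝ} (hρ : 0 ≤ ρ) (n : ℕ) :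
    ρ ^ (2 * n + 1) * hatw w ρ ≤ moment w n := by
  have hsub : Ioo ρ 1 ⊆ Ioo 0 1 := Ioo_subset_Ioo_left hρ
  have hint := hw.integrableOn_pow_mul (2 * n + 1)
  rw [hatw, moment, ← integral_const_mul]
  calc ∫ r in Ioo ρ 1, ρ ^ (2 * n + 1) * w r
      ≤ ∫ r in Ioo ρ 1, r ^ (2 * n + 1) * w r := by
        refine setIntegral_mono_on ((hw.integrableOn_Ioo.mono_set hsub).const_mul _)
          (hint.mono_set hsub) measurableSet_Ioo fun r hr ↦ ?_
        have := hw.1 r ⟨hρ.trans hr.1.le, hr.2⟩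
        gcongr
        exact hr.1.le
    _ ≤ ∫ r in Ioo 0 1, r ^ (2 * n + 1) * w r := by
        refine setIntegral_mono_set hint ?_ (.of_forall hsub)
        filter_upwards [ae_restrict_mem measurableSet_Ioo] with r hr
        exact mul_nonneg (pow_nonneg hr.1.le _) (hw.1 r ⟨hr.1.le, hr.2⟩)

lemma moment_pos (hw : IsRadialWeight w) (n : ℕ) : 0 < moment w n := by
  have hhat := hw.2.2 (1 / 2) (by norm_num)
  exact lt_of_lt_of_le (by positivity) (hw.pow_mul_hatw_le_moment one_half_pos.le n)

lemma summable_pow_div_moment (hw : IsRadialWeight w) {r : ℝ} (hr₀ : 0 ≤ r) (hr₁ : r < 1) :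
    Summable fun n ↦ r ^ n / (2 * moment w n) := by
  obtain ⟨ρ, hρ, hρ₁⟩ : ∃ ρ, √r < ρ ∧ ρ < 1 :=
    exists_between ((Real.sqrt_lt' one_pos).2 (by rwa [one_pow]))
  have hρ₀ : 0 < ρ := (Real.sqrt_nonneg r).trans_lt hρ
  have hhat := hw.2.2 ρ ⟨hρ₀.le, hρ₁⟩
  have hratio : r / ρ ^ 2 < 1 := by
    rw [div_lt_one (by positivity)]
    exact (Real.sqrt_lt' hρ₀).1 hρ
  refine .of_nonneg_of_le (fun n ↦ ?_) (fun n ↦ ?_)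
    ((summable_geometric_of_lt_one (by positivity) hratio).mul_left (1 / (2 * ρ * hatw w ρ)))
  · have := hw.moment_pos n
    positivity
  · calc r ^ n / (2 * moment w n)
        ≤ r ^ n / (2 * (ρ ^ (2 * n + 1) * hatw w ρ)) := by
          gcongr
          exact hw.pow_mul_hatw_le_moment hρ₀.le n
      _ = 1 / (2 * ρ * hatw w ρ) * (r / ρ ^ 2) ^ n := by
          rw [div_pow, ← pow_mul, pow_succ]
          field_simp

end IsRadialWeight

/-! ### The projection of a radial function -/

-- The rotation by `π / n` multiplies the integrand by `-1`.
lemma setIntegral_ball_comp_norm_mul_conj_pow_eq_zero (g : ℝ → ℂ) (r : ℝ) {n : ℕ} (hn : n ≠ 0) :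
    ∫ ζ in ball (0 : ℂ) r, g ‖ζ‖ * (starRingEnd ℂ ζ) ^ n = 0 := by
  have hn' : (n : ℂ) ≠ 0 := Nat.cast_ne_zero.2 hn
  let a : Circle := Circle.exp (Real.pi / n)
  have ha : (starRingEnd ℂ a) ^ n = -1 := by
    rw [← map_pow, Circle.coe_exp, ← Complex.exp_nat_mul]
    push_cast
    rw [← mul_assoc, mul_div_cancel₀ _ hn', Complex.exp_pi_mul_I, map_neg, map_one]
  have hrot := (rotation a).measurePreserving.setIntegral_preimage_emb
    (rotation a).toHomeomorph.measurableEmbedding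
    (fun ζ ↦ g ‖ζ‖ * (starRingEnd ℂ ζ) ^ n) (ball 0 r)
  rw [LinearIsometryEquiv.preimage_ball, map_zero] at hrot
  simp only [rotation_apply, norm_mul, Circle.norm_coe, one_mul, map_mul, mul_pow, ha, neg_one_mul,
    mul_neg, integral_neg] at hrot
  exact self_eq_neg.1 hrot.symm

lemma setIntegral_ball_comp_norm_mul_tsum_conj_pow {g : ℝ → ℂ} {a : ℕ → ℂ}
    (hg : IntegrableOn (fun ζ : ℂ ↦ g ‖ζ‖) (ball 0 1)) (ha : Summable a) :
    ∫ ζ in ball (0 : ℂ) 1, g ‖ζ‖ * ∑' n, a n * (starRingEnd ℂ ζ) ^ n =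
      a 0 * ∫ ζ in ball (0 : ℂ) 1, g ‖ζ‖ := by
  let T (n : ℕ) (ζ : ℂ) : ℂ := a n * (g ‖ζ‖ * (starRingEnd ℂ ζ) ^ n)
  have hT_norm (n : ℕ) : ∀ᵐ ζ ∂volume.restrict (ball (0 : ℂ) 1), ‖T n ζ‖ ≤ ‖a n‖ * ‖g ‖ζ‖‖ := by
    filter_upwards [ae_restrict_mem measurableSet_ball] with ζ hζ
    have hζ' : ‖ζ‖ ^ n ≤ 1 := pow_le_one₀ (norm_nonneg ζ) (mem_ball_zero_iff.1 hζ).le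
    simp only [T, norm_mul, norm_pow, RCLike.norm_conj]
    exact mul_le_mul_of_nonneg_left (mul_le_of_le_one_right (norm_nonneg _) hζ') (norm_nonneg _)
  have hT_int (n : ℕ) : IntegrableOn (T n) (ball 0 1) :=
    (hg.norm.const_mul ‖a n‖).mono'
      ((hg.aestronglyMeasurable.mul (by fun_prop)).const_mul (a n)) (hT_norm n)
  have hT_summable : Summable fun n ↦ ∫ ζ in ball (0 : ℂ) 1, ‖T n ζ‖ := by
    refine .of_nonneg_of_le (fun n ↦ integral_nonneg fun _ ↦ norm_nonneg _) (fun n ↦ ?_)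
      (ha.norm.mul_right (∫ ζ in ball (0 : ℂ) 1, ‖g ‖ζ‖‖))
    rw [← integral_const_mul]
    exact integral_mono_ae (hT_int n).norm (hg.norm.const_mul _) (hT_norm n)
  have hT_zero (n : ℕ) (hn : n ≠ 0) : ∫ ζ in ball (0 : ℂ) 1, T n ζ = 0 := by
    rw [integral_const_mul, setIntegral_ball_comp_norm_mul_conj_pow_eq_zero g 1 hn, mul_zero]
  calc ∫ ζ in ball (0 : ℂ) 1, g ‖ζ‖ * ∑' n, a n * (starRingEnd ℂ ζ) ^ n
      = ∫ ζ in ball (0 : ℂ) 1, ∑' n, T n ζ := by simp only [T, ← tsum_mul_left, mul_left_comm]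
    _ = ∫ ζ in ball (0 : ℂ) 1, T 0 ζ :=
        (hasSum_integral_of_summable_integral_norm hT_int hT_summable).unique
          (hasSum_single 0 hT_zero)
    _ = a 0 * ∫ ζ in ball (0 : ℂ) 1, g ‖ζ‖ := by
        simp only [T, pow_zero, mul_one, integral_const_mul]

lemma conj_Bker (w : ℝ → ℝ) (z ζ : ℂ) :
    starRingEnd ℂ (Bker w z ζ) =
      ∑' n, z ^ n / ((2 * moment w n : ℝ) : ℂ) * (starRingEnd ℂ ζ) ^ n := by
  rw [Bker, Complex.conj_tsum]
  refine tsum_congr fun n ↦ ?_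
  rw [map_div₀, map_pow, map_mul, Complex.conj_conj, Complex.conj_ofReal, mul_pow,
    mul_div_right_comm]

lemma Pw_comp_norm {w : ℝ → ℝ} (hw : IsRadialWeight w) {g : ℝ → ℂ}
    (hg : Integrable (fun s ↦ g s * w s) radialMeasure) {z : ℂ} (hz : z ∈ ball (0 : ℂ) 1) :
    Pw w (fun ζ ↦ g ‖ζ‖) z = (∫ s, g s * w s ∂radialMeasure) / (2 * moment w 0 : ℝ) := by
  have hker : Summable fun n ↦ z ^ n / ((2 * moment w n : ℝ) : ℂ) := by
    refine .of_norm ((hw.summable_pow_div_moment (norm_nonneg z) (mem_ball_zero_iff.1 hz)).congr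
      fun n ↦ ?_)
    have := hw.moment_pos n
    rw [norm_div, norm_pow, Complex.norm_of_nonneg (by positivity)]
  have hint : ∫ ζ in ball (0 : ℂ) 1, g ‖ζ‖ * starRingEnd ℂ (Bker w z ζ) * (w ‖ζ‖ : ℂ) =
      1 / ((2 * moment w 0 : ℝ) : ℂ) * (Real.pi * ∫ s, g s * w s ∂radialMeasure) := by
    simp only [mul_right_comm (g _), conj_Bker]
    rw [setIntegral_ball_comp_norm_mul_tsum_conj_pow (g := fun s ↦ g s * w s)
      (integrableOn_ball_comp_norm hg) hker, pow_zero,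
      setIntegral_ball_comp_norm hg.aestronglyMeasurable, Complex.real_smul]
  rw [Pw, hint, mul_left_comm, mul_div_cancel_left₀ _ (Complex.ofReal_ne_zero.2 Real.pi_ne_zero),
    one_div_mul_eq_div]

/-! ### Norms of radial functions -/

lemma LpC_comp_norm {p : ℝ} (hp : 0 ≤ p) {v : ℝ → ℝ} (hv : AEMeasurable v radialMeasure)
    {g : ℝ → ℂ} (hg : AEMeasurable g radialMeasure) :
    LpC p v (fun z ↦ g ‖z‖) =
      (∫⁻ s, ‖g s‖ₑ ^ p * ENNReal.ofReal (v s) ∂radialMeasure) ^ (1 / p) := by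
  have hsplit (s : ℝ) : ENNReal.ofReal (‖g s‖ ^ p * v s) = ‖g s‖ₑ ^ p * ENNReal.ofReal (v s) := by
    rw [ENNReal.ofReal_mul (by positivity), ← ENNReal.ofReal_rpow_of_nonneg (norm_nonneg _) hp,
      ofReal_norm]
  have hpi : ENNReal.ofReal Real.pi ≠ 0 := (ENNReal.ofReal_pos.2 Real.pi_pos).ne'
  simp only [LpC, hsplit]
  rw [setLIntegral_ball_comp_norm (F := fun s ↦ ‖g s‖ₑ ^ p * ENNReal.ofReal (v s)) (by fun_prop),
    mul_comm, ENNReal.mul_div_cancel_right hpi ENNReal.ofReal_ne_top]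

lemma LpC_const {p : ℝ} (hp : 0 < p) {v : ℝ → ℝ} (hv : IsRadialWeight v) (c : ℂ) :
    LpC p v (fun _ ↦ c) = ‖c‖ₑ * ENNReal.ofReal (2 * moment v 0) ^ (1 / p) := by
  have hv_meas := hv.integrable_radialMeasure.aemeasurable
  rw [LpC_comp_norm (g := fun _ ↦ c) hp.le hv_meas aemeasurable_const,
    lintegral_const_mul'' _ hv_meas.ennreal_ofReal, hv.lintegral_radialMeasure,
    ENNReal.mul_rpow_of_nonneg _ _ (by positivity), ← ENNReal.rpow_mul, mul_one_div_cancel hp.ne',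
    ENNReal.rpow_one]

lemma LpC_congr {p : ℝ} {v : ℝ → ℝ} {f₁ f₂ : ℂ → ℂ} (h : EqOn f₁ f₂ (ball 0 1)) :
    LpC p v f₁ = LpC p v f₂ := by
  rw [LpC, LpC, setLIntegral_congr_fun measurableSet_ball fun z hz ↦ by rw [h hz]]

/-! ### Duality -/

lemma rpow_sub_one_rpow_mul_le {p q : ℝ} (hpq : p.HolderConjugate q) {t a b : ℝ≥0}
    (h : t * b ≤ a) : (t ^ (q - 1)) ^ p * b ≤ t ^ (q - 1) * a := by
  have hq : q = q - 1 + 1 := by ring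
  calc (t ^ (q - 1)) ^ p * b = t ^ (q - 1) * (t * b) := by
        rw [← NNReal.rpow_mul, hpq.symm.sub_one_mul_conj, hq,
          NNReal.rpow_add_one' (by linarith [hpq.symm.pos]), ← hq, mul_assoc]
    _ ≤ t ^ (q - 1) * a := by gcongr

lemma le_rpow_of_le_mul_rpow {p q : ℝ} (hpq : p.HolderConjugate q) {I K : ℝ≥0∞} (hI : I ≠ ∞)
    (h : I ≤ K * I ^ (1 / p)) : I ≤ K ^ q := by
  rcases eq_or_ne I 0 with rfl | hI₀
  · exact zero_le
  have hexp : 1 - 1 / p = 1 / q := by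
    rw [one_div, one_div, hpq.one_sub_inv]
  have hroot : I ^ (1 / q) ≤ K := by
    rw [← hexp, ENNReal.rpow_sub _ _ hI₀ hI, ENNReal.rpow_one]
    exact ENNReal.div_le_of_le_mul h
  calc I = (I ^ (1 / q)) ^ q := by
        rw [← ENNReal.rpow_mul, one_div_mul_cancel hpq.symm.ne_zero, ENNReal.rpow_one]
    _ ≤ K ^ q := ENNReal.rpow_le_rpow hroot hpq.symm.nonneg

/-- A bounded approximation of the quotient `a / b`, from which the test functions
`(a / b) ^ (q - 1)` that are extremal in Hölder's inequality are built: `a` is cut off at height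
`n`, and `b` is raised by `1 / (n + 1)`, so that no case distinction is needed where `b = 0`. -/
def truncDiv (n : ℕ) (a b : ℝ≥0) : ℝ≥0 := min a n / (b + 1 / (n + 1))

lemma truncDiv_mul_le (n : ℕ) (a b : ℝ≥0) : truncDiv n a b * b ≤ min a n :=
  calc truncDiv n a b * b ≤ truncDiv n a b * (b + 1 / (n + 1)) := by
        gcongr
        exact le_self_add
    _ = min a n := div_mul_cancel₀ _ (by positivity)

lemma truncDiv_le (n : ℕ) (a b : ℝ≥0) : truncDiv n a b ≤ n * (n + 1) :=
  calc truncDiv n a b ≤ n / (1 / (n + 1)) := by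
        unfold truncDiv
        gcongr
        · exact min_le_right _ _
        · exact le_add_self
    _ = n * (n + 1) := by rw [div_div_eq_mul_div, div_one]

lemma measurable_truncDiv {α : Type*} [MeasurableSpace α] {w v : α → ℝ≥0} (hw : Measurable w)
    (hv : Measurable v) (n : ℕ) : Measurable fun x ↦ truncDiv n (w x) (v x) := by
  unfold truncDiv
  fun_prop

lemma tendsto_min_natCast (a : ℝ≥0) :
    Tendsto (fun n : ℕ ↦ ((min a n : ℝ≥0) : ℝ≥0∞)) atTop (𝓝 a) := by
  obtain ⟨N, hN⟩ := exists_nat_ge a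
  refine tendsto_const_nhds.congr' ?_
  filter_upwards [eventually_ge_atTop N] with n hn
  rw [min_eq_left (hN.trans (Nat.cast_le.2 hn))]

lemma tendsto_truncDiv {a : ℝ≥0} (ha : a ≠ 0) (b : ℝ≥0) :
    Tendsto (fun n ↦ (truncDiv n a b : ℝ≥0∞)) atTop (𝓝 (a / b)) := by
  have hden : Tendsto (fun n : ℕ ↦ ((b + 1 / (n + 1) : ℝ≥0) : ℝ≥0∞)) atTop (𝓝 b) := by
    simpa only [add_zero] using ENNReal.tendsto_coe.2
      (tendsto_one_div_add_atTop_nhds_zero_nat.const_add b)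
  have hdiv := ENNReal.Tendsto.div (tendsto_min_natCast a) (.inl (ENNReal.coe_ne_zero.2 ha)) hden
    (.inl ENNReal.coe_ne_top)
  refine hdiv.congr fun n ↦ ?_
  rw [truncDiv, ENNReal.coe_div (by positivity)]

lemma div_rpow_one_div_rpow {p q : ℝ} (hpq : p.HolderConjugate q) (a b : ℝ≥0) :
    ((a : ℝ≥0∞) / (b : ℝ≥0∞) ^ (1 / p)) ^ q = ((a : ℝ≥0∞) / b) ^ (q - 1) * a := by
  have hq : q = q - 1 + 1 := by ring
  have hexp : 1 / p * q = q - 1 := by rw [one_div_mul_eq_div, hpq.symm.div_conj_eq_sub_one]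
  rw [ENNReal.div_rpow_of_nonneg _ _ hpq.symm.nonneg, ← ENNReal.rpow_mul, hexp,
    ENNReal.div_rpow_of_nonneg _ _ hpq.symm.sub_one_pos.le, ENNReal.mul_div_right_comm.symm]
  congr 1
  conv_lhs => rw [hq, ENNReal.rpow_add_of_nonneg _ _ hpq.symm.sub_one_pos.le zero_le_one,
    ENNReal.rpow_one]

lemma tendsto_truncDiv_rpow_mul_min {p q : ℝ} (hpq : p.HolderConjugate q) (a b : ℝ≥0) :
    Tendsto (fun n ↦ ((truncDiv n a b ^ (q - 1) * min a n : ℝ≥0) : ℝ≥0∞)) atTop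
      (𝓝 (((a : ℝ≥0∞) / (b : ℝ≥0∞) ^ (1 / p)) ^ q)) := by
  have hq := hpq.symm.sub_one_pos
  rcases eq_or_ne a 0 with rfl | ha
  · simp [hpq.symm.pos]
  rw [div_rpow_one_div_rpow hpq]
  simp only [ENNReal.coe_mul, ENNReal.coe_rpow_of_nonneg _ hq.le]
  exact ENNReal.Tendsto.mul ((ENNReal.continuous_rpow_const.tendsto _).comp (tendsto_truncDiv ha b))
    (.inr ENNReal.coe_ne_top) (tendsto_min_natCast a) (.inl (ENNReal.coe_ne_zero.2 ha))

section

variable {α : Type*} [MeasurableSpace α] {μ : Measure α} {p q : ℝ} {w v : α → ℝ≥0} {K : ℝ≥0∞}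

lemma lintegral_truncDiv_rpow_mul_min_le (hpq : p.HolderConjugate q) (hw : Measurable w)
    (hv : Measurable v) (hw_int : ∫⁻ x, w x ∂μ ≠ ∞)
    (hK : ∀ g : α → ℝ≥0, Measurable g → BddAbove (range g) →
      ∫⁻ x, g x * w x ∂μ ≤ K * (∫⁻ x, (g x : ℝ≥0∞) ^ p * v x ∂μ) ^ (1 / p)) (n : ℕ) :
    ∫⁻ x, (truncDiv n (w x) (v x) ^ (q - 1) * min (w x) n : ℝ≥0) ∂μ ≤ K ^ q := by
  let g (x : α) : ℝ≥0 := truncDiv n (w x) (v x) ^ (q - 1)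
  have hg_meas : Measurable g := (measurable_truncDiv hw hv n).pow_const _
  have hg_le (x : α) : g x ≤ (n * (n + 1) : ℝ≥0) ^ (q - 1) :=
    NNReal.rpow_le_rpow (truncDiv_le n _ _) hpq.symm.sub_one_pos.le
  have hle : ∫⁻ x, (g x * min (w x) n : ℝ≥0) ∂μ ≤ ∫⁻ x, g x * w x ∂μ := by
    refine lintegral_mono fun x ↦ ?_
    rw [← ENNReal.coe_mul]
    gcongr
    exact min_le_left _ _
  have hfin : ∫⁻ x, g x * w x ∂μ ≠ ∞ := by
    let M : ℝ≥0 := (n * (n + 1)) ^ (q - 1)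
    have hM : ∫⁻ x, g x * w x ∂μ ≤ M * ∫⁻ x, w x ∂μ := by
      rw [← lintegral_const_mul _ hw.coe_nnreal_ennreal]
      refine lintegral_mono fun x ↦ ?_
      gcongr
      exact hg_le x
    exact ne_top_of_le_ne_top (ENNReal.mul_ne_top ENNReal.coe_ne_top hw_int) hM
  refine le_rpow_of_le_mul_rpow hpq (ne_top_of_le_ne_top hfin hle) ?_
  calc ∫⁻ x, (g x * min (w x) n : ℝ≥0) ∂μ
      ≤ ∫⁻ x, g x * w x ∂μ := hle
    _ ≤ K * (∫⁻ x, (g x : ℝ≥0∞) ^ p * v x ∂μ) ^ (1 / p) :=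
        hK g hg_meas ⟨_, forall_mem_range.2 hg_le⟩
    _ ≤ K * (∫⁻ x, (g x * min (w x) n : ℝ≥0) ∂μ) ^ (1 / p) := by
        gcongr K * ?_ ^ _
        · exact one_div_nonneg.2 hpq.nonneg
        refine lintegral_mono fun x ↦ ?_
        rw [← ENNReal.coe_rpow_of_nonneg _ hpq.nonneg, ← ENNReal.coe_mul]
        exact ENNReal.coe_le_coe.2 (rpow_sub_one_rpow_mul_le hpq (truncDiv_mul_le n _ _))

lemma lintegral_div_rpow_le_of_measurable (hpq : p.HolderConjugate q) (hw : Measurable w)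
    (hv : Measurable v) (hw_int : ∫⁻ x, w x ∂μ ≠ ∞)
    (hK : ∀ g : α → ℝ≥0, Measurable g → BddAbove (range g) →
      ∫⁻ x, g x * w x ∂μ ≤ K * (∫⁻ x, (g x : ℝ≥0∞) ^ p * v x ∂μ) ^ (1 / p)) :
    ∫⁻ x, ((w x : ℝ≥0∞) / (v x : ℝ≥0∞) ^ (1 / p)) ^ q ∂μ ≤ K ^ q := by
  let φ (n : ℕ) (x : α) : ℝ≥0∞ := (truncDiv n (w x) (v x) ^ (q - 1) * min (w x) n : ℝ≥0)
  have hφ (n : ℕ) : Measurable (φ n) := by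
    have := measurable_truncDiv hw hv n
    fun_prop
  calc ∫⁻ x, ((w x : ℝ≥0∞) / (v x : ℝ≥0∞) ^ (1 / p)) ^ q ∂μ
      = ∫⁻ x, liminf (fun n ↦ φ n x) atTop ∂μ :=
        lintegral_congr fun x ↦ (tendsto_truncDiv_rpow_mul_min hpq (w x) (v x)).liminf_eq.symm
    _ ≤ liminf (fun n ↦ ∫⁻ x, φ n x ∂μ) atTop := lintegral_liminf_le hφ
    _ ≤ liminf (fun _ : ℕ ↦ K ^ q) atTop := liminf_le_liminf <|
        .of_forall (lintegral_truncDiv_rpow_mul_min_le hpq hw hv hw_int hK)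
    _ = K ^ q := liminf_const _

theorem lintegral_div_rpow_le_of_forall_lintegral_mul_le (hpq : p.HolderConjugate q)
    (hw : AEMeasurable w μ) (hv : AEMeasurable v μ) (hw_int : ∫⁻ x, w x ∂μ ≠ ∞)
    (hK : ∀ g : α → ℝ≥0, Measurable g → BddAbove (range g) →
      ∫⁻ x, g x * w x ∂μ ≤ K * (∫⁻ x, (g x : ℝ≥0∞) ^ p * v x ∂μ) ^ (1 / p)) :
    ∫⁻ x, ((w x : ℝ≥0∞) / (v x : ℝ≥0∞) ^ (1 / p)) ^ q ∂μ ≤ K ^ q := by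
  have hmk {F : α → ℝ≥0 → ℝ≥0 → ℝ≥0∞} :
      ∫⁻ x, F x (w x) (v x) ∂μ = ∫⁻ x, F x (hw.mk w x) (hv.mk v x) ∂μ := by
    refine lintegral_congr_ae ?_
    filter_upwards [hw.ae_eq_mk, hv.ae_eq_mk] with x hwx hvx
    rw [← hwx, ← hvx]
  rw [hmk (F := fun _ a b ↦ ((a : ℝ≥0∞) / (b : ℝ≥0∞) ^ (1 / p)) ^ q)]
  refine lintegral_div_rpow_le_of_measurable hpq hw.measurable_mk hv.measurable_mk
    (hmk (F := fun _ a _ ↦ a) ▸ hw_int) fun g hg hg_bdd ↦ ?_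
  rw [← hmk (F := fun x a _ ↦ g x * a), ← hmk (F := fun x _ b ↦ (g x : ℝ≥0∞) ^ p * b)]
  exact hK g hg hg_bdd

end

/-! ### Boundedness of the projection -/

section

variable {p : ℝ} {w v : ℝ → ℝ} {g : ℝ → ℝ≥0}

lemma IsRadialWeight.integrable_coe_mul (hw : IsRadialWeight w) (hg : Measurable g)
    (hg_bdd : BddAbove (range g)) :
    Integrable (fun s ↦ (g s : ℝ) * w s) radialMeasure := by
  obtain ⟨M, hM⟩ := hg_bdd
  refine hw.integrable_radialMeasure.bdd_mul (c := M) (by fun_prop) (.of_forall fun s ↦ ?_)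
  rw [NNReal.norm_eq]
  exact_mod_cast hM (mem_range_self s)

lemma IsRadialWeight.enorm_integral_coe_mul (hw : IsRadialWeight w) (hg : Measurable g)
    (hg_bdd : BddAbove (range g)) :
    ‖∫ s, ((g s : ℝ) : ℂ) * w s ∂radialMeasure‖ₑ =
      ∫⁻ s, g s * ENNReal.ofReal (w s) ∂radialMeasure := by
  have hnonneg : 0 ≤ᵐ[radialMeasure] fun s ↦ (g s : ℝ) * w s := by
    filter_upwards [hw.ae_nonneg_radialMeasure] with s hs
    exact mul_nonneg (g s).2 hs
  simp only [← Complex.ofReal_mul]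
  rw [integral_complex_ofReal, ← ofReal_norm,
    Complex.norm_of_nonneg (integral_nonneg_of_ae hnonneg),
    ofReal_integral_eq_lintegral_ofReal (hw.integrable_coe_mul hg hg_bdd) hnonneg]
  simp only [ENNReal.ofReal_mul (NNReal.coe_nonneg _), ENNReal.ofReal_coe_nnreal]

lemma LpC_coe_comp_norm (hp : 0 ≤ p) (hv : IsRadialWeight v) (hg : Measurable g) :
    LpC p v (fun z ↦ ((g ‖z‖ : ℝ) : ℂ)) =
      (∫⁻ s, (g s : ℝ≥0∞) ^ p * ENNReal.ofReal (v s) ∂radialMeasure) ^ (1 / p) := by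
  rw [LpC_comp_norm (g := fun s ↦ ((g s : ℝ) : ℂ)) hp hv.integrable_radialMeasure.aemeasurable
    (by fun_prop)]
  simp [enorm_eq_nnnorm]

lemma LpC_coe_comp_norm_lt_top (hp : 0 < p) (hv : IsRadialWeight v) (hg : Measurable g)
    (hg_bdd : BddAbove (range g)) : LpC p v (fun z ↦ ((g ‖z‖ : ℝ) : ℂ)) < ∞ := by
  obtain ⟨M, hM⟩ := hg_bdd
  have hle : ∫⁻ s, (g s : ℝ≥0∞) ^ p * ENNReal.ofReal (v s) ∂radialMeasure ≤
      (M : ℝ≥0∞) ^ p * ENNReal.ofReal (2 * moment v 0) := by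
    rw [← hv.lintegral_radialMeasure, ← lintegral_const_mul''
      _ hv.integrable_radialMeasure.aemeasurable.ennreal_ofReal]
    refine lintegral_mono fun s ↦ ?_
    gcongr
    exact hM (mem_range_self s)
  rw [LpC_coe_comp_norm hp.le hv hg]
  refine ENNReal.rpow_lt_top_of_nonneg (by positivity) (ne_top_of_le_ne_top ?_ hle)
  exact ENNReal.mul_ne_top (ENNReal.rpow_ne_top_of_nonneg hp.le ENNReal.coe_ne_top)
    ENNReal.ofReal_ne_top

lemma LpC_Pw_coe_comp_norm (hp : 0 < p) (hw : IsRadialWeight w) (hv : IsRadialWeight v)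
    (hg : Measurable g) (hg_bdd : BddAbove (range g)) :
    LpC p v (Pw w fun z ↦ ((g ‖z‖ : ℝ) : ℂ)) =
      (∫⁻ s, g s * ENNReal.ofReal (w s) ∂radialMeasure) / ENNReal.ofReal (2 * moment w 0) *
        ENNReal.ofReal (2 * moment v 0) ^ (1 / p) := by
  have hm : 0 < 2 * moment w 0 := mul_pos two_pos (hw.moment_pos 0)
  have hint : Integrable (fun s ↦ ((g s : ℝ) : ℂ) * w s) radialMeasure := by
    simp only [← Complex.ofReal_mul]
    exact (hw.integrable_coe_mul hg hg_bdd).ofReal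
  rw [LpC_congr fun z hz ↦ Pw_comp_norm (g := fun s ↦ ((g s : ℝ) : ℂ)) hw hint hz,
    LpC_const hp hv, div_eq_mul_inv, enorm_mul, enorm_inv (Complex.ofReal_ne_zero.2 hm.ne'),
    hw.enorm_integral_coe_mul hg hg_bdd, ← ofReal_norm, Complex.norm_of_nonneg hm.le,
    ← div_eq_mul_inv]

theorem PwBounded.exists_lintegral_mul_le (hP : PwBounded p w v) (hp : 0 < p)
    (hw : IsRadialWeight w) (hv : IsRadialWeight v) :
    ∃ K : ℝ≥0∞, K ≠ ∞ ∧ ∀ g : ℝ → ℝ≥0, Measurable g → BddAbove (range g) →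
      ∫⁻ s, g s * ENNReal.ofReal (w s) ∂radialMeasure ≤
        K * (∫⁻ s, (g s : ℝ≥0∞) ^ p * ENNReal.ofReal (v s) ∂radialMeasure) ^ (1 / p) := by
  obtain ⟨C, -, hC⟩ := hP
  have hmw : ENNReal.ofReal (2 * moment w 0) ≠ 0 :=
    (ENNReal.ofReal_pos.2 (mul_pos two_pos (hw.moment_pos 0))).ne'
  have hmv : ENNReal.ofReal (2 * moment v 0) ^ (1 / p) ≠ 0 :=
    (ENNReal.rpow_pos (ENNReal.ofReal_pos.2 (mul_pos two_pos (hv.moment_pos 0)))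
      ENNReal.ofReal_ne_top).ne'
  have hmv' : ENNReal.ofReal (2 * moment v 0) ^ (1 / p) ≠ ∞ :=
    ENNReal.rpow_ne_top_of_nonneg (by positivity) ENNReal.ofReal_ne_top
  have hK : ENNReal.ofReal C / ENNReal.ofReal (2 * moment v 0) ^ (1 / p) *
      ENNReal.ofReal (2 * moment w 0) ≠ ∞ :=
    ENNReal.mul_ne_top (ENNReal.div_ne_top ENNReal.ofReal_ne_top hmv) ENNReal.ofReal_ne_top
  refine ⟨_, hK, fun g hg hg_bdd ↦ ?_⟩
  have hbound := (hC _ (by fun_prop) (LpC_coe_comp_norm_lt_top hp hv hg hg_bdd)).2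
  rw [LpC_Pw_coe_comp_norm hp hw hv hg hg_bdd, LpC_coe_comp_norm hp.le hv hg,
    ← ENNReal.le_div_iff_mul_le (.inl hmv) (.inl hmv'),
    ENNReal.div_le_iff hmw ENNReal.ofReal_ne_top, ENNReal.mul_div_right_comm] at hbound
  rwa [mul_right_comm]

end

theorem PwBounded.lintegral_sigmaE_lt_top {p : ℝ} {w v : ℝ → ℝ} (hP : PwBounded p w v)
    (hp : 1 < p) (hw : IsRadialWeight w) (hv : IsRadialWeight v) :
    ∫⁻ s, sigmaE p w v s ∂radialMeasure < ∞ := by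
  have hpq : p.HolderConjugate (p / (p - 1)) := .conjExponent hp
  obtain ⟨K, hK, hK_le⟩ := hP.exists_lintegral_mul_le hpq.pos hw hv
  have hw_fin : ∫⁻ s, ENNReal.ofReal (w s) ∂radialMeasure ≠ ∞ :=
    hw.lintegral_radialMeasure ▸ ENNReal.ofReal_ne_top
  calc ∫⁻ s, sigmaE p w v s ∂radialMeasure
      ≤ K ^ (p / (p - 1)) := lintegral_div_rpow_le_of_forall_lintegral_mul_le hpq
        hw.integrable_radialMeasure.aemeasurable.real_toNNReal
        hv.integrable_radialMeasure.aemeasurable.real_toNNReal hw_fin hK_le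
    _ < ∞ := ENNReal.rpow_lt_top_of_nonneg hpq.symm.nonneg hK

lemma setLIntegral_ofReal_mul_le_lintegral_radialMeasure (F : ℝ → ℝ≥0∞) :
    ∫⁻ s in Ioo 0 1, ENNReal.ofReal s * F s ≤ ∫⁻ s, F s ∂radialMeasure := by
  rw [radialMeasure, lintegral_withDensity_eq_lintegral_mul_non_measurable _ (by fun_prop)
    (.of_forall fun _ ↦ ENNReal.ofReal_lt_top)]
  refine setLIntegral_mono_ae' measurableSet_Ioo (.of_forall fun s hs ↦ ?_)
  rw [Pi.mul_apply]
  gcongr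
  linarith [hs.1]

lemma ofReal_eq_zero_of_sigmaE_ne_top {p : ℝ} (hp : 1 < p) {w v : ℝ → ℝ} {s : ℝ}
    (hσ : sigmaE p w v s ≠ ∞) (hv : v s = 0) : ENNReal.ofReal (w s) = 0 := by
  by_contra hw
  have hp₀ : 0 < p := one_pos.trans hp
  refine hσ ?_
  rw [sigmaE, hv, ENNReal.ofReal_zero, ENNReal.zero_rpow_of_pos (by positivity),
    ENNReal.div_zero hw, ENNReal.top_rpow_of_pos (div_pos hp₀ (sub_pos.2 hp))]

lemma ae_sigmaE_ne_top {p : ℝ} {w v : ℝ → ℝ} (hw : IsRadialWeight w) (hv : IsRadialWeight v)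
    (hσ : ∫⁻ s in Ioo 0 1, ENNReal.ofReal s * sigmaE p w v s ≠ ∞) :
    ∀ᵐ s ∂volume.restrict (Ioo 0 1), sigmaE p w v s ≠ ∞ := by
  have hw_meas := hw.integrableOn_Ioo.aemeasurable
  have hv_meas := hv.integrableOn_Ioo.aemeasurable
  have hσ_meas : AEMeasurable (sigmaE p w v) (volume.restrict (Ioo 0 1)) := by
    unfold sigmaE
    fun_prop
  filter_upwards [ae_lt_top' (by fun_prop) hσ, ae_restrict_mem measurableSet_Ioo]
    with s hs hs_mem hs_top
  rw [hs_top, ENNReal.mul_top (ENNReal.ofReal_pos.2 hs_mem.1).ne'] at hs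
  exact hs.false

lemma setLIntegral_setOf_and_eq_zero {α β : Type*} [MeasurableSpace α] [MeasurableSpace β]
    [MeasurableSingletonClass β] {μ : Measure α} {t : Set α} {v : α → β} {b : β} {f : α → ℝ≥0∞}
    (hv : AEMeasurable v (μ.restrict t)) (h : ∀ᵐ x ∂μ.restrict t, v x = b → f x = 0) :
    ∫⁻ x in {x | x ∈ t ∧ v x = b}, f x ∂μ = 0 := by
  have hnull : NullMeasurableSet (v ⁻¹' {b}) (μ.restrict t) :=
    hv.nullMeasurableSet_preimage (measurableSet_singleton b)
  have hset : {x | x ∈ t ∧ v x = b} = v ⁻¹' {b} ∩ t := by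
    ext x
    exact and_comm
  rw [hset, ← Measure.restrict_restrict₀ hnull]
  exact lintegral_eq_zero_of_ae_eq_zero ((ae_restrict_iff'₀ hnull).2 h)

/-- Let `1 < p < ∞` and let `ω`, `ν` be radial weights. If `P_ω` is bounded
on `L^p_ν`, then `{s ∈ [0,1) : ν(s) = 0}` has measure zero with respect to `ω(s) ds`, and
`∫₀¹ s (ω(s)/ν(s)^{1/p})^{p'} ds < ∞`. -/
theorem sigma_integrable_of_bounded (p : ℝ) (hp : 1 < p) (w v : ℝ → ℝ)
    (hw : IsRadialWeight w) (hv : IsRadialWeight v)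
    (hP : PwBounded p w v) :
    (∫⁻ s in {s : ℝ | s ∈ Set.Ico (0:ℝ) 1 ∧ v s = 0}, ENNReal.ofReal (w s)) = 0 ∧
      (∫⁻ s in Set.Ioo (0:ℝ) 1, ENNReal.ofReal s * sigmaE p w v s) < ⊤ := by
  have hσ : ∫⁻ s in Ioo (0 : ℝ) 1, ENNReal.ofReal s * sigmaE p w v s < ∞ :=
    (setLIntegral_ofReal_mul_le_lintegral_radialMeasure _).trans_lt
      (hP.lintegral_sigmaE_lt_top hp hw hv)
  refine ⟨setLIntegral_setOf_and_eq_zero hv.2.1.aemeasurable ?_, hσ⟩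
  rw [← restrict_Ioo_eq_restrict_Ico]
  filter_upwards [ae_sigmaE_ne_top hw hv hσ.ne] with s hs
  exact ofReal_eq_zero_of_sigmaE_ne_top hp hs

end
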